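/- arXiv:1705.09861 — 10 statements merged into one kernel-verified Lean document; each statement's English description precedes it below -/
import Mathlib

section
/- Let F = (f_1, …, f_K) be a frame for ℤ₂^d and let G = (g_1, …, g_K) be a dual frame of F. Then a family H = (h_1, …, h_K) of vectors in ℤ₂^d is a dual frame of F if and only if Θ_H* = Θ_G* + C for some K×d matrix C over ℤ₂ satisfying Θ_F C = 0 (the d×d zero matrix). -/
open Matrix

/-- The synthesis operator of a family of `K` vectors in `ℤ₂^d`:
the `d × K` matrix whose `j`-th column is `F j`. -/
def synthesis {d K : ℕ} (F : Fin K → Fin d → ZMod 2) :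
    Matrix (Fin d) (Fin K) (ZMod 2) :=
  Matrix.of fun i j => F j i

/-- A family of vectors in `ℤ₂^d` is a (binary) frame if it spans `ℤ₂^d`. -/
def IsFrame {d K : ℕ} (F : Fin K → Fin d → ZMod 2) : Prop :=
  Submodule.span (ZMod 2) (Set.range F) = ⊤

/-- `H` is a dual frame of `F` if `Θ_F Θ_H* = I_d`. -/
def IsDualFrame {d K : ℕ} (F H : Fin K → Fin d → ZMod 2) : Prop :=
  synthesis F * (synthesis H)ᵀ = 1

theorem stmt_0 {d K : ℕ} (F G H : Fin K → Fin d → ZMod 2)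
    (hF : IsFrame F) (hG : IsDualFrame F G) :
    IsDualFrame F H ↔
      ∃ C : Matrix (Fin K) (Fin d) (ZMod 2),
        (synthesis H)ᵀ = (synthesis G)ᵀ + C ∧ synthesis F * C = 0 := by
  unfold IsDualFrame at *
  constructor
  · intro hH
    refine ⟨(synthesis H)ᵀ - (synthesis G)ᵀ, by simp, ?_⟩
    rw [Matrix.mul_sub, hH, hG, sub_self]
  · rintro ⟨C, hC, hFC⟩
    rw [hC, Matrix.mul_add, hG, hFC, add_zero]
end

section
/- Let K > d ≥ 1 and let α ∈ ℤ₂^K. There exists a pair of frames F = (f_1, …, f_K) and H = (h_1, …, h_K) for ℤ₂^d with H a dual frame of F and with dot products (f_i, h_i) = α[i] for every 1 ≤ i ≤ K, if and only if ‖α‖₀ ≡ d (mod 2). -/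
/-!
A dual pair of frames amounts to two `d × K` matrices `A`, `B` with `A * Bᵀ = 1` (the spanning
conditions follow from this), and the dot products are the diagonal entries of `Bᵀ * A`. Taking
traces, their sum is `tr (A * Bᵀ) = d`, so `∑ i, α i = d` in `ZMod 2`; this is the parity condition,
since `∑ i, α i` is the class of `‖α‖₀`.

For the converse, induct on `K`, looking at the first entry of `α`.
* If `d = 1`, take `F = H = α`.
* If `α 0 = 1` and `d > 1`, solve for the tail of `α` in dimension `d - 1`, and adjoin a new
  coordinate direction as the first vector of both frames.
* If `α 0 = 0` and `d < K - 1`, solve for the tail of `α` in dimension `d`, and adjoin zero vectors.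
* If `α 0 = 0` and `d = K - 1`, let `β = 1 + tail α`, which has even weight, and take
  `F = (β, e_1, …, e_d)` and `H = (β, e_1 + β_1 β, …, e_d + β_d β)`. The associated idempotent
  `Bᵀ * A` is `1 + γ γᵀ` with `γ = (1, β)`.
-/

open Matrix

/-- The dot product on `ℤ₂^d`. -/
def dotp {d : ℕ} (a b : Fin d → ZMod 2) : ZMod 2 := ∑ n, a n * b n

/-- `‖α‖₀`, the number of nonzero entries of a vector `α ∈ ℤ₂^K`. -/
def zeroNorm {K : ℕ} (α : Fin K → ZMod 2) : ℕ :=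
  (Finset.univ.filter fun i => α i ≠ 0).card

/-- The families `F` and `H` satisfy `Θ_F Θ_H* = 1` entrywise and have dot products `α`. -/
def DualPairWith (d K : ℕ) (α : Fin K → ZMod 2) (F H : Fin K → Fin d → ZMod 2) : Prop :=
  (∀ a b, ∑ j, F j a * H j b = if a = b then 1 else 0) ∧ ∀ i, ∑ n, F i n * H i n = α i

lemma zmod_two_mul_self (x : ZMod 2) : x * x = x := by
  revert x; decide

lemma natCast_zeroNorm {K : ℕ} (α : Fin K → ZMod 2) : (zeroNorm α : ZMod 2) = ∑ i, α i := by
  have h : ∀ x : ZMod 2, (if x ≠ 0 then (1 : ZMod 2) else 0) = x := by decide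
  simp only [zeroNorm, Finset.natCast_card_filter, h]

lemma isDualFrame_iff {d K : ℕ} (F H : Fin K → Fin d → ZMod 2) :
    IsDualFrame F H ↔ ∀ a b, ∑ j, F j a * H j b = if a = b then 1 else 0 := by
  simp only [IsDualFrame, ← Matrix.ext_iff, Matrix.mul_apply, synthesis, Matrix.transpose_apply,
    Matrix.of_apply, Matrix.one_apply]

/-- A family with a dual is spanning: `x = ∑ j, (x, h_j) f_j`. -/
lemma isFrame_of_dual {d K : ℕ} (F H : Fin K → Fin d → ZMod 2)
    (h : ∀ a b, ∑ j, F j a * H j b = if a = b then 1 else 0) : IsFrame F := by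
  refine (Submodule.eq_top_iff').2 fun x => ?_
  have hx : x = ∑ j, (∑ b, H j b * x b) • F j := by
    ext a
    calc x a = ∑ b, (∑ j, F j a * H j b) * x b := by simp [h]
      _ = ∑ j, ∑ b, F j a * H j b * x b := by
        simp only [Finset.sum_mul]
        exact Finset.sum_comm
      _ = _ := by
        simp only [Finset.sum_apply, Pi.smul_apply, smul_eq_mul, Finset.sum_mul]
        exact Finset.sum_congr rfl fun j _ => Finset.sum_congr rfl fun b _ => by ring
  rw [hx]
  exact Submodule.sum_mem _ fun j _ =>
    Submodule.smul_mem _ _ (Submodule.subset_span (Set.mem_range_self j))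

lemma exists_dualPairWith_cons_one {d K : ℕ} {α : Fin K → ZMod 2}
    (h : ∃ F H, DualPairWith d K α F H) :
    ∃ F H, DualPairWith (d + 1) (K + 1) (Fin.cons 1 α) F H := by
  obtain ⟨F, H, h1, h2⟩ := h
  refine ⟨Fin.cons (Fin.cons 1 0) fun i => Fin.cons 0 (F i),
    Fin.cons (Fin.cons 1 0) fun i => Fin.cons 0 (H i), ?_, ?_⟩
  · intro a b
    refine Fin.cases ?_ (fun a => ?_) a <;> refine Fin.cases ?_ (fun b => ?_) b <;>
      simp [Fin.sum_univ_succ, h1, Fin.succ_ne_zero, (Fin.succ_ne_zero _).symm]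
  · intro i
    refine Fin.cases ?_ (fun i => ?_) i <;> simp [Fin.sum_univ_succ, h2]

lemma exists_dualPairWith_cons_zero {d K : ℕ} {α : Fin K → ZMod 2}
    (h : ∃ F H, DualPairWith d K α F H) :
    ∃ F H, DualPairWith d (K + 1) (Fin.cons 0 α) F H := by
  obtain ⟨F, H, h1, h2⟩ := h
  refine ⟨Fin.cons 0 F, Fin.cons 0 H, ?_, ?_⟩
  · intro a b
    simp [Fin.sum_univ_succ, h1]
  · intro i
    refine Fin.cases ?_ (fun i => ?_) i <;> simp [h2]

/-- The case of one vector more than the dimension, with the first dot product zero. -/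
lemma exists_dualPairWith_corank_one {d : ℕ} (α : Fin d → ZMod 2) (hα : ∑ i, α i = d) :
    ∃ F H, DualPairWith d (d + 1) (Fin.cons 0 α) F H := by
  refine ⟨Fin.cons (fun i => 1 + α i) fun i => Pi.single i 1,
    Fin.cons (fun i => 1 + α i) fun i n =>
      (Pi.single i 1 : Fin d → ZMod 2) n + (1 + α i) * (1 + α n), ?_, ?_⟩
  · intro a b
    simp only [Fin.sum_univ_succ, Fin.cons_zero, Fin.cons_succ, Pi.single_apply, ite_mul, one_mul,
      zero_mul, Finset.sum_ite_eq, Finset.mem_univ, if_true]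
    rw [add_left_comm, CharTwo.add_self_eq_zero, add_zero]
    simp only [eq_comm]
  · intro i
    refine Fin.cases ?_ (fun i => ?_) i
    · simp only [Fin.cons_zero, zmod_two_mul_self, Finset.sum_add_distrib, hα]
      simp [CharTwo.add_self_eq_zero]
    · simp only [Fin.cons_succ, Pi.single_apply, ite_mul, one_mul, zero_mul, Finset.sum_ite_eq',
        Finset.mem_univ, if_true, zmod_two_mul_self]
      rw [← add_assoc, CharTwo.add_self_eq_zero, zero_add]

lemma exists_dualPairWith (K : ℕ) : ∀ (d : ℕ) (α : Fin K → ZMod 2), 1 ≤ d → d < K →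
    ∑ i, α i = d → ∃ F H, DualPairWith d K α F H := by
  induction K with
  | zero => intro d α _ h; omega
  | succ K ih =>
    intro d α hd hK hα
    rcases hd.eq_or_lt with rfl | hd1
    · refine ⟨fun i _ => α i, fun i _ => α i, fun a b => ?_, fun i => ?_⟩
      · simp [zmod_two_mul_self, hα, Subsingleton.elim a b]
      · simp [zmod_two_mul_self]
    obtain ⟨x, β, rfl⟩ : ∃ x β, α = Fin.cons x β := ⟨_, _, (Fin.cons_self_tail α).symm⟩
    simp only [Fin.sum_univ_succ, Fin.cons_zero, Fin.cons_succ] at hα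
    have hx : x = 0 ∨ x = 1 := by clear hα; revert x; decide
    rcases hx with rfl | rfl
    · rw [zero_add] at hα
      rcases (Nat.lt_succ_iff.1 hK).eq_or_lt with rfl | hK1
      · exact exists_dualPairWith_corank_one β hα
      · exact exists_dualPairWith_cons_zero (ih d β hd hK1 hα)
    · obtain ⟨e, rfl⟩ : ∃ e, d = e + 1 := ⟨d - 1, by omega⟩
      refine exists_dualPairWith_cons_one (ih e β (by omega) (by omega) ?_)
      rw [Nat.cast_succ, add_comm] at hα
      exact add_right_cancel hα


theorem stmt_2 {d K : ℕ} (hd : 1 ≤ d) (hK : d < K) (α : Fin K → ZMod 2) :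
    (∃ F H : Fin K → Fin d → ZMod 2,
        IsFrame F ∧ IsFrame H ∧ IsDualFrame F H ∧
          ∀ i, dotp (F i) (H i) = α i) ↔
      zeroNorm α % 2 = d % 2 := by
  have parity : zeroNorm α % 2 = d % 2 ↔ ∑ i, α i = d := by
    rw [← natCast_zeroNorm]
    exact (ZMod.natCast_eq_natCast_iff' _ _ 2).symm
  rw [parity]
  constructor
  · rintro ⟨F, H, -, -, hFH, h⟩
    rw [isDualFrame_iff] at hFH
    calc ∑ i, α i = ∑ i, ∑ n, F i n * H i n := Finset.sum_congr rfl fun i _ => (h i).symm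
      _ = ∑ n, ∑ i, F i n * H i n := Finset.sum_comm
      _ = d := by simp [hFH]
  · intro h
    obtain ⟨F, H, h1, h2⟩ := exists_dualPairWith K d α hd hK h
    refine ⟨F, H, isFrame_of_dual F H h1, isFrame_of_dual H F fun a b => ?_,
      (isDualFrame_iff F H).2 h1, h2⟩
    simp only [mul_comm (H _ _), h1, eq_comm]
end

section
/- Let K > d ≥ 1 and let α ∈ ℤ₂^K be a nonzero vector. There exists a Parseval frame F = (f_1, …, f_K) for ℤ₂^d with dot products (f_i, f_i) = α[i] for every 1 ≤ i ≤ K, if and only if ‖α‖₀ ≡ d (mod 2). -/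
/-!
Over `ℤ₂` every scalar is its own square, so the condition `(f_k, f_k) = α k` says that the rows of
the synthesis matrix add up to `α`, while the Parseval condition says that these rows are
orthonormal. Thus the theorem asks when a nonzero vector is a sum of `d` orthonormal vectors of
`ℤ₂^K`.

Necessity is the identity `tr (Θ* Θ) = tr (Θ Θ*) = tr I_d = d`: the diagonal of `Θ* Θ` is `α`,
whose entries add up to `‖α‖₀` in `ℤ₂`.

For sufficiency, identify vectors with subsets of `Fin K` and let `S` be the support of `α`. If
`d ≤ |S|`, partition `S` into `d - 1` singletons and one remaining block, whose size is odd by the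
parity assumption (`exists_sets_of_le`). If `|S| < d`, fix `p ∈ S` and a set `A ⊇ S` with `d + 1`
elements, which exists because `d < K`. Then `B = (A \ S) ∪ {p}` has even size, so the sets
`B \ {i}` with `i ∈ A \ S` have odd size, meet pairwise in sets of even size, and have symmetric
difference `{p}`; add the singletons `{i}` with `i ∈ S \ {p}` (`exists_sets_of_lt`).
-/

open Matrix

/-- `F` is a Parseval frame if `Θ_F Θ_F* = I_d`. -/
def IsParsevalFrame {d K : ℕ} (F : Fin K → Fin d → ZMod 2) : Prop :=
  synthesis F * (synthesis F)ᵀ = 1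

/-- A family of `d` subsets of `Fin K`, of odd size and meeting pairwise in sets of even size, whose
symmetric difference is the support of `α`, yields the required frame: the indicators of the sets
are the rows of its synthesis matrix. The sets are indexed by a `d`-element subset `J` of
`Fin K`. -/
lemma exists_frame_of_sets {d K : ℕ} (α : Fin K → ZMod 2) (J : Finset (Fin K)) (hJ : J.card = d)
    (R : Fin K → Finset (Fin K))
    (horth : ∀ i ∈ J, ∀ j ∈ J, ((R i ∩ R j).card : ZMod 2) = if i = j then 1 else 0)
    (hcov : ∀ k, ((J.filter fun i => k ∈ R i).card : ZMod 2) = α k) :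
    ∃ F : Fin K → Fin d → ZMod 2, IsParsevalFrame F ∧ ∀ i, dotp (F i) (F i) = α i := by
  let e := J.equivFinOfCardEq hJ
  refine ⟨fun k n => if k ∈ R (e.symm n) then 1 else 0, ?_, fun k => ?_⟩
  · ext m n
    have h := horth _ (e.symm m).2 _ (e.symm n).2
    simp only [Subtype.coe_inj, e.symm.injective.eq_iff] at h
    rw [Matrix.one_apply, ← h]
    simp only [synthesis, Matrix.mul_apply, Matrix.of_apply, Matrix.transpose_apply, mul_ite,
      mul_one, mul_zero, ← ite_and, Finset.sum_boole]
    congr 2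
    ext k
    simp [and_comm]
  · rw [← hcov k]
    simp only [dotp, mul_ite, mul_one, mul_zero, Finset.card_filter, Nat.cast_sum]
    rw [← Finset.sum_coe_sort J, ← e.symm.sum_comp]
    refine Finset.sum_congr rfl fun n _ => ?_
    split_ifs <;> simp

lemma cast_card_eq_one {n : ℕ} (h : n % 2 = 1) : (n : ZMod 2) = 1 :=
  (ZMod.natCast_eq_one_iff_odd).2 (Nat.odd_iff.2 h)

lemma cast_card_eq_zero {n : ℕ} (h : n % 2 = 0) : (n : ZMod 2) = 0 :=
  (ZMod.natCast_eq_zero_iff_even).2 (Nat.even_iff.2 h)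

/-- Partition of `S` into the singletons `{i}`, `i ∈ A \ {p}`, and the remaining block, of odd size,
indexed by `p`; here `p ∈ A ⊆ S` and `J = A` has `d` elements. -/
lemma exists_sets_of_le {d K : ℕ} (hd : 1 ≤ d) (S : Finset (Fin K)) (hS : S.card % 2 = d % 2)
    (hle : d ≤ S.card) : ∃ (J : Finset (Fin K)) (R : Fin K → Finset (Fin K)), J.card = d ∧
      (∀ i ∈ J, ∀ j ∈ J, ((R i ∩ R j).card : ZMod 2) = if i = j then 1 else 0) ∧
      ∀ k, ((J.filter fun i => k ∈ R i).card : ZMod 2) = if k ∈ S then 1 else 0 := by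
  obtain ⟨A, hAS, hA⟩ := Finset.exists_subset_card_eq hle
  obtain ⟨p, hp⟩ : A.Nonempty := Finset.card_pos.1 (by omega)
  have hAp : (A.erase p).card = d - 1 := by rw [Finset.card_erase_of_mem hp, hA]
  have hblock : ((S \ A.erase p).card : ZMod 2) = 1 := by
    apply cast_card_eq_one
    rw [Finset.card_sdiff_of_subset ((Finset.erase_subset _ _).trans hAS), hAp]
    omega
  refine ⟨A, fun i => if i = p then S \ A.erase p else {i}, hA, fun i hi j hj => ?_, fun k => ?_⟩
  · by_cases hip : i = p <;> by_cases hjp : j = p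
    · simp [hip, hjp, hblock]
    · have : (S \ A.erase p) ∩ {j} = ∅ := by ext x; simp; grind
      simp [hip, hjp, this, Ne.symm hjp]
    · have : {i} ∩ (S \ A.erase p) = ∅ := by ext x; simp; grind
      simp [hip, hjp, this]
    · by_cases hij : i = j
      · simp [hij, hjp]
      · simp [hip, hjp, hij]
  · by_cases hkS : k ∈ S
    · by_cases hk : k ∈ A.erase p
      · have : (A.filter fun i => k ∈ if i = p then S \ A.erase p else {i}) = {k} := by
          ext x; simp; grind
        rw [this]; simp [hkS]
      · have : (A.filter fun i => k ∈ if i = p then S \ A.erase p else {i}) = {p} := by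
          ext x; simp; grind
        rw [this]; simp [hkS]
    · have : (A.filter fun i => k ∈ if i = p then S \ A.erase p else {i}) = ∅ := by
        ext x; simp; grind
      rw [this]; simp [hkS]

/-- The singletons `{i}`, `i ∈ S \ {p}`, and the sets `B \ {i}`, `i ∈ A \ S`, where `p ∈ S ⊆ A`,
`|A| = d + 1` and `B = (A \ S) ∪ {p}`. They are indexed by `J = A \ {p}`. -/
lemma exists_sets_of_lt {d K : ℕ} (hK : d < K) (S : Finset (Fin K)) (hS : S.card % 2 = d % 2)
    (hne : S.Nonempty) (hlt : S.card < d) :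
    ∃ (J : Finset (Fin K)) (R : Fin K → Finset (Fin K)), J.card = d ∧
      (∀ i ∈ J, ∀ j ∈ J, ((R i ∩ R j).card : ZMod 2) = if i = j then 1 else 0) ∧
      ∀ k, ((J.filter fun i => k ∈ R i).card : ZMod 2) = if k ∈ S then 1 else 0 := by
  obtain ⟨A, hSA, hA⟩ := Finset.exists_superset_card_eq (s := S) (n := d + 1) (by omega)
    (by simpa using hK)
  obtain ⟨p, hp⟩ := hne
  have hAS : (A \ S).card = d + 1 - S.card := by rw [Finset.card_sdiff_of_subset hSA, hA]
  set B := insert p (A \ S) with hB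
  have hBc : B.card = d + 1 - S.card + 1 := by
    rw [hB, Finset.card_insert_of_notMem (by simp [hp]), hAS]
  have hmemB : ∀ x, x ∈ B ↔ x = p ∨ x ∈ A ∧ x ∉ S := by simp [hB]
  refine ⟨A.erase p, fun i => if i ∈ S then {i} else B.erase i,
    by rw [Finset.card_erase_of_mem (hSA hp), hA]; rfl, fun i hi j hj => ?_, fun k => ?_⟩
  · have hi' := Finset.mem_erase.1 hi
    have hj' := Finset.mem_erase.1 hj
    by_cases hiS : i ∈ S <;> by_cases hjS : j ∈ S
    · by_cases hij : i = j
      · simp [hij, hjS]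
      · simp [hiS, hjS, hij]
    · have : {i} ∩ B.erase j = ∅ := by ext x; simp; grind
      have hij : i ≠ j := by grind
      simp [hiS, hjS, this, hij]
    · have : B.erase i ∩ {j} = ∅ := by ext x; simp; grind
      have hij : i ≠ j := by grind
      simp [hiS, hjS, this, hij]
    · have hiB : i ∈ B := (hmemB i).2 (.inr ⟨hi'.2, hiS⟩)
      have hjB : j ∈ B := (hmemB j).2 (.inr ⟨hj'.2, hjS⟩)
      by_cases hij : i = j
      · subst hij
        simp only [hiS, if_false, Finset.inter_self, if_true]
        apply cast_card_eq_one
        rw [Finset.card_erase_of_mem hiB]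
        omega
      · simp only [hiS, hjS, hij, if_false]
        apply cast_card_eq_zero
        have : B.erase i ∩ B.erase j = (B.erase i).erase j := by ext x; simp; tauto
        rw [this, Finset.card_erase_of_mem (Finset.mem_erase.2 ⟨Ne.symm hij, hjB⟩),
          Finset.card_erase_of_mem hiB]
        omega
  · by_cases hkS : k ∈ S
    · rw [if_pos hkS]
      by_cases hkp : k = p
      · subst hkp
        have : ((A.erase k).filter fun i => k ∈ if i ∈ S then {i} else B.erase i) = A \ S := by
          ext x; simp; grind
        rw [this]
        apply cast_card_eq_one
        omega
      · have : ((A.erase p).filter fun i => k ∈ if i ∈ S then {i} else B.erase i) = {k} := by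
          ext x; simp; grind
        rw [this]; simp
    · rw [if_neg hkS]
      by_cases hkA : k ∈ A
      · have : ((A.erase p).filter fun i => k ∈ if i ∈ S then {i} else B.erase i) =
            (A \ S).erase k := by
          ext x; simp; grind
        rw [this]
        apply cast_card_eq_zero
        rw [Finset.card_erase_of_mem (by simp [hkA, hkS])]
        omega
      · have : ((A.erase p).filter fun i => k ∈ if i ∈ S then {i} else B.erase i) = ∅ := by
          ext x; simp; grind
        rw [this]; simp

lemma zmod_two_eq_ite (a : ZMod 2) : a = if a ≠ 0 then 1 else 0 := by
  revert a; decide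

theorem stmt_4 {d K : ℕ} (hd : 1 ≤ d) (hK : d < K)
    (α : Fin K → ZMod 2) (hα : α ≠ 0) :
    (∃ F : Fin K → Fin d → ZMod 2,
        IsParsevalFrame F ∧ ∀ i, dotp (F i) (F i) = α i) ↔
      zeroNorm α % 2 = d % 2 := by
  constructor
  · rintro ⟨F, hF, hdot⟩
    have h1 : ((zeroNorm α : ℕ) : ZMod 2) = ∑ i, α i := by
      rw [zeroNorm, ← Finset.sum_boole]
      exact Finset.sum_congr rfl fun i _ => (zmod_two_eq_ite (α i)).symm
    have h2 : ∑ i, α i = ((synthesis F)ᵀ * synthesis F).trace := by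
      refine Finset.sum_congr rfl fun i _ => ?_
      rw [← hdot i]
      rfl
    rw [Matrix.trace_mul_comm, hF, Matrix.trace_one, Fintype.card_fin] at h2
    exact (ZMod.natCast_eq_natCast_iff' _ _ 2).1 (h1.trans h2)
  · intro h
    obtain ⟨k₀, hk₀⟩ := Function.ne_iff.1 hα
    have hne : (Finset.univ.filter fun i => α i ≠ 0).Nonempty := ⟨k₀, by simpa using hk₀⟩
    obtain ⟨J, R, hJ, horth, hcov⟩ : ∃ (J : Finset (Fin K)) (R : Fin K → Finset (Fin K)),
        J.card = d ∧
        (∀ i ∈ J, ∀ j ∈ J, ((R i ∩ R j).card : ZMod 2) = if i = j then 1 else 0) ∧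
        ∀ k, ((J.filter fun i => k ∈ R i).card : ZMod 2) =
          if k ∈ Finset.univ.filter (fun i => α i ≠ 0) then 1 else 0 :=
      (le_or_gt d (zeroNorm α)).elim (exists_sets_of_le hd _ h) (exists_sets_of_lt hK _ h hne)
    refine exists_frame_of_sets α J hJ R horth fun k => ?_
    rw [hcov k, zmod_two_eq_ite (α k)]
    simp
end

section
/- Let S be a d×d matrix over ℤ₂ and let A be a d×m matrix over ℤ₂ with S = A Aᵀ, where m = rank(S) or m = rank(S) + 1. Then rank(A) = rank(S). -/
open Matrix

/-!
Always `rank S ≤ rank A ≤ m ≤ rank S + 1`, so equality could only fail when `rank A = m`.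
In that case `Aᵀ` has rank `m`, hence is surjective, so `S = A * Aᵀ` has the same
column space as `A`.
-/

theorem stmt_5 {d m : ℕ} (S : Matrix (Fin d) (Fin d) (ZMod 2))
    (A : Matrix (Fin d) (Fin m) (ZMod 2)) (hS : S = A * Aᵀ)
    (hm : m = S.rank ∨ m = S.rank + 1) :
    A.rank = S.rank := by
  have hle : S.rank ≤ A.rank := hS ▸ rank_mul_le_left A Aᵀ
  have hwidth : A.rank ≤ m := A.rank_le_width
  by_cases hfull : A.rank = m
  · have hsurj : LinearMap.range Aᵀ.mulVecLin = ⊤ := by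
      apply Submodule.eq_top_of_finrank_eq
      rw [← Matrix.rank, rank_transpose, hfull, Module.finrank_fin_fun]
    rw [hS, Matrix.rank, Matrix.rank, mulVecLin_mul,
      LinearMap.range_comp_of_range_eq_top _ hsurj]
  · omega
end

section
/- Let S be a d×d symmetric matrix over ℤ₂ with rank(S) < d, and let k be a natural number. There exists a k-element frame F = (f_1, …, f_k) for ℤ₂^d such that S = Θ_F Θ_F* if and only if k ≥ 2d − rank(S). -/
/-!
Write `S = ∑ l, f_l f_lᵀ`, which is what `S = Θ Θᵀ` says about the columns `f_l` of `Θ`.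

*Necessity.* If `Θ` has rank `d`, then `Θᵀ` is injective and maps `ker S = ker (Θ Θᵀ)`, of dimension
`d - rank S`, into `ker Θ`, of dimension `k - d`.

*Sufficiency.* A family of `m` vectors with `S = ∑ l, f_l f_lᵀ` spans a space `U ⊇ im S`. Adding
each vector `v` of a basis of a complement of `U` twice makes the family a frame and does not change
the sum, because `v vᵀ + v vᵀ = 0`; the new family has `m + 2 (d - dim U)` members
(`exists_frame_of_factorization`). So it suffices to find a family with `m ≤ 2 dim U - rank S`.

* If `S` is zero or has a nonzero diagonal entry, `rank S` vectors suffice (Albert's theorem,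
  `exists_factorization`). The proof is Wedderburn rank reduction: for `xᵀ S x = 1` the matrix
  `S + (S x)(S x)ᵀ` has smaller rank, and `x` can be chosen so that it is again zero or has a
  nonzero diagonal entry.
* If `S` has zero diagonal, pick `f ∉ im S`, which exists as `rank S < d`. Then `S + f fᵀ` has a
  nonzero diagonal entry and rank at most `rank S + 1`. Adding `f` to its factorization gives
  `rank S + 2` vectors for `S`, spanning `f` and `im S`, hence a space of dimension at least
  `rank S + 1`.
-/

open Matrix

lemma zmod2_eq_one {a : ZMod 2} (h : a ≠ 0) : a = 1 := by
  revert a; decide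

lemma zmod2_mul_self (a : ZMod 2) : a * a = a := by
  revert a; decide

/-- One step of Wedderburn rank reduction. -/
lemma rank_add_vecMulVec_lt {d : ℕ} {S : Matrix (Fin d) (Fin d) (ZMod 2)} (hS : S.IsSymm)
    {x : Fin d → ZMod 2} (hx : x ⬝ᵥ S *ᵥ x = 1) :
    (S + vecMulVec (S *ᵥ x) (S *ᵥ x)).rank < S.rank := by
  set T := S + vecMulVec (S *ᵥ x) (S *ᵥ x) with hT
  have hTv : ∀ y, T *ᵥ y = S *ᵥ y + ((S *ᵥ x) ⬝ᵥ y) • (S *ᵥ x) := by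
    intro y
    rw [hT, add_mulVec, vecMulVec_mulVec]
    simp
  have hadj : ∀ y, (S *ᵥ x) ⬝ᵥ y = x ⬝ᵥ S *ᵥ y := by
    intro y
    rw [dotProduct_mulVec, ← mulVec_transpose, hS.eq]
  have hlt : LinearMap.ker S.mulVecLin < LinearMap.ker T.mulVecLin := by
    refine lt_of_le_of_ne ?_ ?_
    · intro y hy
      simp only [LinearMap.mem_ker, mulVecLin_apply] at hy ⊢
      rw [hTv, hadj, hy]
      simp
    · intro h
      have h1 : x ∈ LinearMap.ker T.mulVecLin := by
        simp only [LinearMap.mem_ker, mulVecLin_apply]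
        rw [hTv, hadj, hx, one_smul, ZModModule.add_self]
      rw [← h] at h1
      simp only [LinearMap.mem_ker, mulVecLin_apply] at h1
      rw [h1] at hx
      simp at hx
  have h1 := Submodule.finrank_lt_finrank_of_lt hlt
  have h2 := S.mulVecLin.finrank_range_add_finrank_ker
  have h3 := T.mulVecLin.finrank_range_add_finrank_ker
  unfold Matrix.rank
  omega

/-- The pivot `x` for a Wedderburn step that leaves a matrix which is zero or still has a nonzero
diagonal entry. -/
lemma exists_pivot {d : ℕ} {S : Matrix (Fin d) (Fin d) (ZMod 2)} (hS : S.IsSymm)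
    {i : Fin d} (hi : S i i = 1) :
    ∃ x : Fin d → ZMod 2, x ⬝ᵥ S *ᵥ x = 1 ∧
      (S + vecMulVec (S *ᵥ x) (S *ᵥ x) = 0 ∨
        ∃ j, (S + vecMulVec (S *ᵥ x) (S *ᵥ x)) j j ≠ 0) := by
  -- The `j`-th diagonal entry of the reduced matrix is `S j j + (S x) j`.
  have key : ∀ x : Fin d → ZMod 2, (∃ j, (S *ᵥ x) j ≠ S j j) →
      ∃ j, (S + vecMulVec (S *ᵥ x) (S *ᵥ x)) j j ≠ 0 := by
    rintro x ⟨j, hj⟩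
    refine ⟨j, fun h => hj ?_⟩
    rw [Matrix.add_apply, vecMulVec_apply, zmod2_mul_self] at h
    exact (CharTwo.add_eq_zero.mp h).symm
  have hq : Pi.single i 1 ⬝ᵥ S *ᵥ Pi.single i 1 = (1 : ZMod 2) := by
    simp [hi]
  by_cases h1 : ∃ j, (S *ᵥ Pi.single i 1) j ≠ S j j
  · exact ⟨Pi.single i 1, hq, Or.inr (key _ h1)⟩
  by_cases h2 : ∃ l, S l l = 0 ∧ ∃ j, (S *ᵥ (Pi.single i 1 + Pi.single l 1)) j ≠ S j j
  · obtain ⟨l, hl, hj⟩ := h2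
    refine ⟨_, ?_, Or.inr (key _ hj)⟩
    have := hS.apply i l
    simp [mulVec_add, add_dotProduct, hi, hl, this, add_assoc, CharTwo.add_self_eq_zero]
  -- Otherwise `S = δ δᵀ`, where `δ` is the diagonal of `S`.
  by_cases h3 : ∃ l, S l l = 1 ∧ ∃ j, (S *ᵥ Pi.single l 1) j ≠ S j j
  · obtain ⟨l, hl, hj⟩ := h3
    exact ⟨Pi.single l 1, by simp [hl], Or.inr (key _ hj)⟩
  refine ⟨Pi.single i 1, hq, Or.inl ?_⟩
  push Not at h1 h2 h3
  have hcol : ∀ a b, S a b = S a a * S b b := by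
    intro a b
    by_cases hb : S b b = 0
    · have e1 := h2 b hb a
      have e2 := h1 a
      rw [mulVec_add, Pi.add_apply, e2] at e1
      have e3 : (S *ᵥ Pi.single b 1) a = 0 := by simpa using e1
      rw [hb, mul_zero]
      simpa using e3
    · have e1 := h3 b (zmod2_eq_one hb) a
      rw [zmod2_eq_one hb, mul_one]
      simpa using e1
  ext a b
  rw [Matrix.add_apply, vecMulVec_apply, h1, h1, hcol a b, CharTwo.add_self_eq_zero]
  rfl

/-- Albert's theorem over `ℤ₂`: a symmetric matrix that is zero or has a nonzero diagonal entry is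
`∑ l, G_l G_lᵀ` for a family `G` of any length `n`
at least its rank. -/
lemma exists_factorization {d : ℕ} (n : ℕ) (S : Matrix (Fin d) (Fin d) (ZMod 2)) (hS : S.IsSymm)
    (hr : S.rank ≤ n) (h : S = 0 ∨ ∃ i, S i i ≠ 0) :
    ∃ G : Fin n → Fin d → ZMod 2, S = ∑ l, vecMulVec (G l) (G l) := by
  induction n generalizing S with
  | zero =>
    refine ⟨0, ?_⟩
    have h0 : S.mulVecLin.range = ⊥ := Submodule.finrank_eq_zero.mp (Nat.le_zero.mp hr)
    have h1 : S.mulVecLin = 0 := LinearMap.range_eq_bot.mp h0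
    ext a b
    have := congrFun (LinearMap.congr_fun h1 (Pi.single b 1)) a
    simpa using this
  | succ n ih =>
    rcases h with rfl | ⟨i, hi⟩
    · exact ⟨0, by simp⟩
    obtain ⟨x, hx, hT⟩ := exists_pivot hS (zmod2_eq_one hi)
    have hlt := rank_add_vecMulVec_lt hS hx
    obtain ⟨G, hG⟩ := ih _ (hS.add (by ext a b; simp [vecMulVec_apply, mul_comm]))
      (by omega) hT
    refine ⟨Fin.cons (S *ᵥ x) G, ?_⟩
    rw [Fin.sum_univ_succ]
    simp only [Fin.cons_zero, Fin.cons_succ]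
    rw [← hG, add_comm S, ← add_assoc, ZModModule.add_self, zero_add]

lemma rank_add_le_add_rank {d : ℕ} (A B : Matrix (Fin d) (Fin d) (ZMod 2)) :
    (A + B).rank ≤ A.rank + B.rank := by
  unfold Matrix.rank
  rw [mulVecLin_add]
  exact (Submodule.finrank_mono (LinearMap.range_add_le _ _)).trans
    (Submodule.finrank_add_le_finrank_add_finrank _ _)

/-- The span of a family contains the image of the matrix it factorizes. -/
lemma range_le_span {d : ℕ} {ι : Type*} [Fintype ι] (G : ι → Fin d → ZMod 2) :
    (∑ l, vecMulVec (G l) (G l)).mulVecLin.range ≤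
      Submodule.span (ZMod 2) (Set.range G) := by
  rintro _ ⟨x, rfl⟩
  rw [mulVecLin_apply, sum_mulVec]
  refine Submodule.sum_mem _ fun l _ => ?_
  rw [vecMulVec_mulVec, op_smul_eq_smul]
  exact Submodule.smul_mem _ _ (Submodule.subset_span ⟨l, rfl⟩)

lemma eq_synthesis_iff {d k : ℕ} (S : Matrix (Fin d) (Fin d) (ZMod 2))
    (F : Fin k → Fin d → ZMod 2) :
    S = synthesis F * (synthesis F)ᵀ ↔ S = ∑ l, vecMulVec (F l) (F l) := by
  have : synthesis F * (synthesis F)ᵀ = ∑ l, vecMulVec (F l) (F l) := by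
    ext a b
    simp [synthesis, mul_apply, Matrix.sum_apply, vecMulVec_apply]
  rw [this]

/-- A spanning family with at most `k` members is padded with zero vectors to `k` members. -/
lemma exists_frame_of_card_le {d k : ℕ} {ι : Type*} [Fintype ι] (G : ι → Fin d → ZMod 2)
    (hspan : Submodule.span (ZMod 2) (Set.range G) = ⊤) (hk : Fintype.card ι ≤ k) :
    ∃ F : Fin k → Fin d → ZMod 2, IsFrame F ∧
      ∑ l, vecMulVec (G l) (G l) = synthesis F * (synthesis F)ᵀ := by
  classical
  obtain ⟨e⟩ : Nonempty (ι ↪ Fin k) :=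
    Function.Embedding.nonempty_of_card_le (by simpa using hk)
  refine ⟨Function.extend e G 0, ?_, ?_⟩
  · rw [IsFrame, eq_top_iff, ← hspan]
    refine Submodule.span_mono ?_
    rintro _ ⟨l, rfl⟩
    exact ⟨e l, e.injective.extend_apply _ _ _⟩
  · rw [eq_synthesis_iff]
    refine Fintype.sum_of_injective e e.injective _ _ ?_ ?_
    · intro j hj
      rw [Function.extend_apply' _ _ _ (by simpa using hj)]
      simp
    · intro l
      rw [e.injective.extend_apply]

/-- A factorization of `S` becomes a frame after adjoining a basis of a complement of its span,
each basis vector taken twice. -/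
lemma exists_frame_of_factorization {d k : ℕ} {ι : Type*} [Fintype ι] (G : ι → Fin d → ZMod 2)
    (hk : Fintype.card ι +
      2 * (d - Module.finrank (ZMod 2) (Submodule.span (ZMod 2) (Set.range G))) ≤ k) :
    ∃ F : Fin k → Fin d → ZMod 2, IsFrame F ∧
      ∑ l, vecMulVec (G l) (G l) = synthesis F * (synthesis F)ᵀ := by
  obtain ⟨W, hW⟩ := Submodule.exists_isCompl (Submodule.span (ZMod 2) (Set.range G))
  have hdim := Submodule.finrank_add_eq_of_isCompl hW
  rw [Module.finrank_fin_fun] at hdim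
  let b := Module.finBasis (ZMod 2) W
  let N : Fin (Module.finrank (ZMod 2) W) → Fin d → ZMod 2 := fun l => (b l : Fin d → ZMod 2)
  have hN : Submodule.span (ZMod 2) (Set.range N) = W := by
    have h1 : Set.range N = W.subtype '' Set.range b := by
      rw [← Set.range_comp]; rfl
    rw [h1, Submodule.span_image, b.span_eq, Submodule.map_top, Submodule.range_subtype]
  obtain ⟨F, hF, hS⟩ := exists_frame_of_card_le (k := k) (Sum.elim G (Sum.elim N N))
    (by
      rw [Set.Sum.elim_range, Set.Sum.elim_range, Set.union_self, Submodule.span_union, hN]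
      exact hW.sup_eq_top)
    (by simp only [Fintype.card_sum, Fintype.card_fin]; omega)
  refine ⟨F, hF, ?_⟩
  rw [← hS]
  simp [ZModModule.add_self]

/-- The radical of `S`, embedded by the analysis operator, lies in the kernel of the synthesis
operator. -/
lemma le_card_of_frame {d k : ℕ} (F : Fin k → Fin d → ZMod 2) (hF : IsFrame F) :
    2 * d - (synthesis F * (synthesis F)ᵀ).rank ≤ k := by
  set A := synthesis F with hA
  have hrank : A.rank = d := by
    have hc : A.col = F := rfl
    rw [rank_eq_finrank_span_cols, hc, show Submodule.span (ZMod 2) (Set.range F) = ⊤ from hF,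
      finrank_top, Module.finrank_fin_fun]
  have hrank' : Aᵀ.rank = d := by rw [rank_transpose, hrank]
  have h1 := A.mulVecLin.finrank_range_add_finrank_ker
  have h2 := Aᵀ.mulVecLin.finrank_range_add_finrank_ker
  have h3 := (A * Aᵀ).mulVecLin.finrank_range_add_finrank_ker
  rw [Module.finrank_fin_fun] at h1 h2 h3
  have hinj : Function.Injective Aᵀ.mulVecLin := by
    rw [← LinearMap.ker_eq_bot, ← Submodule.finrank_eq_zero (R := ZMod 2)]
    unfold Matrix.rank at hrank'
    omega
  have hle : (LinearMap.ker (A * Aᵀ).mulVecLin).map Aᵀ.mulVecLin ≤ LinearMap.ker A.mulVecLin := by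
    rintro _ ⟨x, hx, rfl⟩
    simpa [mulVec_mulVec] using hx
  have h4 := Submodule.finrank_mono hle
  rw [← (Submodule.equivMapOfInjective _ hinj _).finrank_eq] at h4
  unfold Matrix.rank at hrank ⊢
  omega

theorem stmt_8 {d : ℕ} (S : Matrix (Fin d) (Fin d) (ZMod 2))
    (hsymm : S.IsSymm) (hrank : S.rank < d) (k : ℕ) :
    (∃ F : Fin k → Fin d → ZMod 2,
        IsFrame F ∧ S = synthesis F * (synthesis F)ᵀ) ↔
      2 * d - S.rank ≤ k := by
  constructor
  · rintro ⟨F, hF, rfl⟩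
    exact le_card_of_frame F hF
  intro hk
  by_cases hdiag : ∃ i, S i i ≠ 0
  · obtain ⟨G, hG⟩ := exists_factorization S.rank S hsymm le_rfl (Or.inr hdiag)
    have hle := Submodule.finrank_mono (range_le_span G)
    rw [← hG] at hle
    change S.rank ≤ _ at hle
    rw [hG]
    refine exists_frame_of_factorization G ?_
    rw [Fintype.card_fin]
    omega
  push Not at hdiag
  obtain ⟨f, hf⟩ : ∃ f, f ∉ S.mulVecLin.range := by
    by_contra! h
    have h1 : S.rank = d := by
      unfold Matrix.rank
      rw [show S.mulVecLin.range = ⊤ from eq_top_iff.mpr fun f _ => h f, finrank_top, Module.finrank_fin_fun]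
    omega
  have hf0 : ∃ i, f i ≠ 0 := by
    by_contra! h
    exact hf (by rw [funext h]; exact Submodule.zero_mem _)
  obtain ⟨i, hi⟩ := hf0
  obtain ⟨G, hG⟩ := exists_factorization (S.rank + 1) (S + vecMulVec f f)
    (hsymm.add (by ext a b; simp [vecMulVec_apply, mul_comm]))
    ((rank_add_le_add_rank _ _).trans (Nat.add_le_add_left (rank_vecMulVec_le _ _) _))
    (Or.inr ⟨i, by simpa [vecMulVec_apply, hdiag] using hi⟩)
  let H : Option (Fin (S.rank + 1)) → Fin d → ZMod 2 := fun o => o.elim f G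
  have hH : S = ∑ l, vecMulVec (H l) (H l) := by
    rw [Fintype.sum_option]
    change S = vecMulVec f f + ∑ l, vecMulVec (G l) (G l)
    rw [← hG, add_comm S, ← add_assoc, ZModModule.add_self, zero_add]
  have hle := range_le_span H
  rw [← hH] at hle
  have hlt := Submodule.finrank_lt_finrank_of_lt
    (lt_of_le_of_ne hle fun h => hf (h ▸ Submodule.subset_span ⟨none, rfl⟩))
  change S.rank < _ at hlt
  obtain ⟨F, hF, hSF⟩ := exists_frame_of_factorization (k := k) H (by
    rw [Fintype.card_option, Fintype.card_fin]
    omega)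
  exact ⟨F, hF, hH.trans hSF⟩
end

section
/- Let S be a d×d symmetric matrix over ℤ₂ and suppose S = A Aᵀ for some d×m matrix A over ℤ₂. (1) If every column of A is odd, then S is parity indicative. (2) Conversely, if S is parity indicative and the columns of A are linearly independent, then every column of A is odd. -/
/-! Over `ℤ₂` every scalar is its own square, so the self-pairing of a vector is the sum of its
entries. Writing `c j` for the sum of the `j`-th column of `A`, the diagonal entry of `S = A Aᵀ` is
`S i i = ∑ j, A i j`, while the sum of row `i` of `S` is `∑ k, ∑ j, A i j * A k j = ∑ j, A i j * c j`.
Since an element of `ℤ₂` is determined by whether it equals `1`, `S` is parity indicative iff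
`A *ᵥ 1 = A *ᵥ c`. This holds if `c = 1`, and forces `c = 1` when the columns of `A` are
linearly independent. -/

open Matrix

/-- A vector over `ℤ₂` is odd if its dot product with itself is `1`. -/
def IsOddVec {d : ℕ} (v : Fin d → ZMod 2) : Prop := dotp v v = 1

/-- A `d × d` symmetric matrix `S` over `ℤ₂` is parity indicative if, for every `i`,
the diagonal entry `S i i = 1` if and only if the `i`-th row of `S` is odd. -/
def ParityIndicative {d : ℕ} (S : Matrix (Fin d) (Fin d) (ZMod 2)) : Prop :=
  ∀ i, S i i = 1 ↔ IsOddVec (S i)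

lemma dotp_self {d : ℕ} (v : Fin d → ZMod 2) : dotp v v = ∑ n, v n := by
  have h : ∀ a : ZMod 2, a * a = a := by decide
  simp [dotp, h]

lemma parityIndicative_iff {d m : ℕ} (A : Matrix (Fin d) (Fin m) (ZMod 2)) :
    ParityIndicative (A * Aᵀ) ↔ A *ᵥ 1 = A *ᵥ fun j => ∑ k, A k j := by
  have h : ∀ a b : ZMod 2, (a = 1 ↔ b = 1) ↔ a = b := by decide
  have hdiag (i : Fin d) : (A * Aᵀ) i i = (A *ᵥ 1) i := by
    have := dotp_self (A i)
    simpa [dotp, mul_apply, mulVec, dotProduct] using this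
  have hrow (i : Fin d) : ∑ k, (A * Aᵀ) i k = (A *ᵥ fun j => ∑ k, A k j) i := by
    simp only [mul_apply, transpose_apply, mulVec, dotProduct, Finset.mul_sum]
    exact Finset.sum_comm
  simp only [ParityIndicative, IsOddVec, dotp_self, hdiag, hrow, h, funext_iff]

theorem stmt_9 {d m : ℕ} (S : Matrix (Fin d) (Fin d) (ZMod 2))
    (hsymm : S.IsSymm) (A : Matrix (Fin d) (Fin m) (ZMod 2))
    (hS : S = A * Aᵀ) :
    ((∀ j, IsOddVec (fun i => A i j)) → ParityIndicative S) ∧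
    (ParityIndicative S → LinearIndependent (ZMod 2) (fun j i => A i j) →
      ∀ j, IsOddVec (fun i => A i j)) := by
  subst hS
  simp only [parityIndicative_iff, IsOddVec, dotp_self]
  refine ⟨fun h => ?_, fun h hli j => ?_⟩
  · simp only [h]
    rfl
  · have hinj : Function.Injective A.mulVec := mulVec_injective_iff.2 hli
    exact (congrFun (hinj h) j).symm
end

section
/- Let S be a d×d symmetric matrix over ℤ₂ and suppose S = A Aᵀ for some d×m matrix A over ℤ₂. If S is parity indicative, the diagonal of S is identically zero, and m = rank(A) + 1, then either every column of A is even or every column of A is odd. -/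
/-!
Squaring is the identity on `ℤ₂`, so the parity of a vector is the sum of its entries. Write `𝟙` for
an all-ones vector. The vanishing diagonal of `S = A Aᵀ` says that the rows of `A` are even, i.e.
`A 𝟙 = 0`. Parity indicativity then makes the rows of `S` even, i.e. `A (Aᵀ 𝟙) = S 𝟙 = 0`.
Since `m = rank A + 1`, the kernel of `A` is a line, so it equals `{0, 𝟙}`. Hence `Aᵀ 𝟙`, whose
entries are the parities of the columns of `A`, is either `0` or `𝟙`.
-/

open Matrix

/-- A vector over `ℤ₂` is even if its dot product with itself is `0`. -/
def IsEvenVec {d : ℕ} (v : Fin d → ZMod 2) : Prop := dotp v v = 0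

/-- If `m = rank A + 1`, the kernel of `A` is a line, so over `ℤ₂` its only nonzero vector is the
given one. -/
lemma eq_zero_or_eq_of_mulVec_eq_zero {d m : ℕ} (A : Matrix (Fin d) (Fin m) (ZMod 2))
    (hm : m = A.rank + 1) {v w : Fin m → ZMod 2} (hv : A *ᵥ v = 0) (hv0 : v ≠ 0)
    (hw : A *ᵥ w = 0) : w = 0 ∨ w = v := by
  have hker : Module.finrank (ZMod 2) (LinearMap.ker A.mulVecLin) = 1 := by
    have h := LinearMap.finrank_range_add_finrank_ker A.mulVecLin
    rw [Module.finrank_fin_fun] at h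
    change A.rank + _ = m at h
    omega
  let v' : LinearMap.ker A.mulVecLin := ⟨v, hv⟩
  have hv' : v' ≠ 0 := fun h => hv0 (congrArg Subtype.val h)
  obtain ⟨c, hc⟩ := (finrank_eq_one_iff_of_nonzero' v' hv').1 hker ⟨w, hw⟩
  have hc : c • v = w := congrArg Subtype.val hc
  have h2 : ∀ x : ZMod 2, x = 0 ∨ x = 1 := by decide
  rcases h2 c with rfl | rfl
  · left; simpa using hc.symm
  · right; simpa using hc.symm

theorem stmt_10 {d m : ℕ} (S : Matrix (Fin d) (Fin d) (ZMod 2))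
    (hsymm : S.IsSymm) (A : Matrix (Fin d) (Fin m) (ZMod 2))
    (hS : S = A * Aᵀ) (hpi : ParityIndicative S) (hdiag : S.diag = 0)
    (hm : m = A.rank + 1) :
    (∀ j, IsEvenVec (fun i => A i j)) ∨ (∀ j, IsOddVec (fun i => A i j)) := by
  have hSii : ∀ i, S i i = 0 := fun i => congrFun hdiag i
  have hA1 : A *ᵥ 1 = 0 := by
    ext i
    have h : dotp (A i) (A i) = 0 := by
      rw [← hSii i, hS]; rfl
    rw [dotp_self] at h
    simpa [mulVec, dotProduct] using h
  have hS1 : S *ᵥ 1 = 0 := by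
    ext i
    have h1 : dotp (S i) (S i) ≠ 1 := fun h => by
      have h' := (hpi i).2 h
      rw [hSii i] at h'
      exact zero_ne_one h'
    have h2 : ∀ x : ZMod 2, x ≠ 1 → x = 0 := by decide
    have h := h2 _ h1
    rw [dotp_self] at h
    simpa [mulVec, dotProduct] using h
  have hAA : A *ᵥ (Aᵀ *ᵥ 1) = 0 := by rw [mulVec_mulVec, ← hS, hS1]
  -- `m` is positive, so the all-ones vector is nonzero.
  have h10 : (1 : Fin m → ZMod 2) ≠ 0 := fun h =>
    one_ne_zero (congrFun h ⟨0, by omega⟩)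
  have hcol : ∀ j, dotp (fun i => A i j) (fun i => A i j) = (Aᵀ *ᵥ 1) j := fun j => by
    rw [dotp_self]; simp [mulVec, dotProduct]
  rcases eq_zero_or_eq_of_mulVec_eq_zero A hm hA1 h10 hAA with h | h
  · left; intro j; rw [IsEvenVec, hcol, h]; rfl
  · right; intro j; rw [IsOddVec, hcol, h]; rfl
end

section
/- Let e, o₁, o₂, o₃ ∈ ℤ₂^d be vectors such that e is even and o₁, o₂, o₃ are odd. Then there exist three even vectors f₁, f₂, f₃ ∈ ℤ₂^d and an odd vector p ∈ ℤ₂^d such that e·e* + o₁·o₁* + o₂·o₂* + o₃·o₃* = f₁·f₁* + f₂·f₂* + f₃·f₃* + p·p* (an equality of d×d matrices, where v·v* denotes the rank-one outer product of v with itself) and span{e, o₁, o₂, o₃} = span{f₁, f₂, f₃, p}. -/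
/-!
Over `ℤ₂` the `4 × 4` matrix with zeros on the diagonal and ones elsewhere is orthogonal, since two
distinct rows have exactly two ones in common and each row has three. It is symmetric as well, so
it is its own inverse. Replacing the vectors `e, o₁, o₂, o₃` by the sums of three of them therefore
preserves both the sum of outer products and the span. Because `x * x = x` in `ℤ₂`, the parity
`dotp v v = ∑ n, v n` is additive, so the three sums containing `e` are even and `o₁ + o₂ + o₃` is
odd.
-/

open Matrix

/-- The rank-one outer product `v·v*` of a vector with itself. -/
def outer {d : ℕ} (v : Fin d → ZMod 2) : Matrix (Fin d) (Fin d) (ZMod 2) :=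
  Matrix.vecMulVec v v

/-- Parity is additive because squaring is the identity on `ℤ₂`. -/
lemma dotp_self_add {d : ℕ} (v w : Fin d → ZMod 2) :
    dotp (v + w) (v + w) = dotp v v + dotp w w := by
  have key : ∀ x y : ZMod 2, (x + y) * (x + y) = x * x + y * y := by decide
  simp only [dotp, Pi.add_apply, key, Finset.sum_add_distrib]

lemma span_triple_sums_le {d : ℕ} (a b c e : Fin d → ZMod 2) :
    Submodule.span (ZMod 2) ({a + b + c, a + b + e, a + c + e, b + c + e} : Set (Fin d → ZMod 2)) ≤
      Submodule.span (ZMod 2) ({a, b, c, e} : Set (Fin d → ZMod 2)) := by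
  have ha : a ∈ Submodule.span (ZMod 2) ({a, b, c, e} : Set (Fin d → ZMod 2)) :=
    Submodule.subset_span (by simp)
  have hb : b ∈ Submodule.span (ZMod 2) ({a, b, c, e} : Set (Fin d → ZMod 2)) :=
    Submodule.subset_span (by simp)
  have hc : c ∈ Submodule.span (ZMod 2) ({a, b, c, e} : Set (Fin d → ZMod 2)) :=
    Submodule.subset_span (by simp)
  have he : e ∈ Submodule.span (ZMod 2) ({a, b, c, e} : Set (Fin d → ZMod 2)) :=
    Submodule.subset_span (by simp)
  rw [Submodule.span_le]
  rintro x (rfl | rfl | rfl | rfl)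
  · exact add_mem (add_mem ha hb) hc
  · exact add_mem (add_mem ha hb) he
  · exact add_mem (add_mem ha hc) he
  · exact add_mem (add_mem hb hc) he

/-- The reverse inclusion also comes from `span_triple_sums_le`: taking sums of three vectors out
of four is an involution over `ℤ₂`. -/
lemma span_triple_sums {d : ℕ} (a b c e : Fin d → ZMod 2) :
    Submodule.span (ZMod 2) ({a, b, c, e} : Set (Fin d → ZMod 2)) =
      Submodule.span (ZMod 2)
        ({a + b + c, a + b + e, a + c + e, b + c + e} : Set (Fin d → ZMod 2)) := by
  refine le_antisymm ?_ (span_triple_sums_le a b c e)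
  have key : ∀ x y z w : ZMod 2,
      (x + y + z) + (x + y + w) + (x + z + w) = x ∧ (x + y + z) + (x + y + w) + (y + z + w) = y ∧
      (x + y + z) + (x + z + w) + (y + z + w) = z ∧
      (x + y + w) + (x + z + w) + (y + z + w) = w := by decide
  have h := span_triple_sums_le (a + b + c) (a + b + e) (a + c + e) (b + c + e)
  have h1 : (a + b + c) + (a + b + e) + (a + c + e) = a :=
    funext fun n => (key (a n) (b n) (c n) (e n)).1
  have h2 : (a + b + c) + (a + b + e) + (b + c + e) = b :=
    funext fun n => (key (a n) (b n) (c n) (e n)).2.1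
  have h3 : (a + b + c) + (a + c + e) + (b + c + e) = c :=
    funext fun n => (key (a n) (b n) (c n) (e n)).2.2.1
  have h4 : (a + b + e) + (a + c + e) + (b + c + e) = e :=
    funext fun n => (key (a n) (b n) (c n) (e n)).2.2.2
  rwa [h1, h2, h3, h4] at h

/-- Orthogonality of the change of vectors, in terms of outer products. -/
lemma outer_triple_sums {d : ℕ} (a b c e : Fin d → ZMod 2) :
    outer a + outer b + outer c + outer e =
      outer (a + b + c) + outer (a + b + e) + outer (a + c + e) + outer (b + c + e) := by
  ext i j
  simp only [outer, Matrix.add_apply, Matrix.vecMulVec_apply, Pi.add_apply]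
  have h2 : (2 : ZMod 2) = 0 := rfl
  generalize a i = x, b i = y, c i = z, e i = w, a j = x', b j = y', c j = z', e j = w'
  linear_combination (-(x * x' + y * y' + z * z' + w * w') - x * (y' + z' + w') -
    y * (x' + z' + w') - z * (x' + y' + w') - w * (x' + y' + z')) * h2

theorem stmt_11 {d : ℕ} (e o₁ o₂ o₃ : Fin d → ZMod 2)
    (he : IsEvenVec e) (ho₁ : IsOddVec o₁) (ho₂ : IsOddVec o₂)
    (ho₃ : IsOddVec o₃) :
    ∃ f₁ f₂ f₃ p : Fin d → ZMod 2,
      IsEvenVec f₁ ∧ IsEvenVec f₂ ∧ IsEvenVec f₃ ∧ IsOddVec p ∧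
      outer e + outer o₁ + outer o₂ + outer o₃ =
        outer f₁ + outer f₂ + outer f₃ + outer p ∧
      Submodule.span (ZMod 2) ({e, o₁, o₂, o₃} : Set (Fin d → ZMod 2)) =
        Submodule.span (ZMod 2) ({f₁, f₂, f₃, p} : Set (Fin d → ZMod 2)) := by
  unfold IsEvenVec IsOddVec at *
  refine ⟨e + o₁ + o₂, e + o₁ + o₃, e + o₂ + o₃, o₁ + o₂ + o₃, ?_, ?_, ?_, ?_,
    outer_triple_sums e o₁ o₂ o₃, span_triple_sums e o₁ o₂ o₃⟩
  all_goals
    simp only [dotp_self_add, he, ho₁, ho₂, ho₃]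
    decide
end

section
/- Let S be a d×d parity indicative symmetric matrix over ℤ₂ with diag(S) ≠ 0 (some diagonal entry equals 1) and rank(S) < d. Set K = 2d − rank(S). For every nonzero α ∈ ℤ₂^K with ‖α‖₀ ≡ Tr(S) (mod 2), there exists a K-element frame F = (f_1, …, f_K) for ℤ₂^d such that S = Θ_F Θ_F* and (f_i, f_i) = α[i] for every 1 ≤ i ≤ K. -/
/-!
Write `c = (1, …, 1)` and let `B(x, y) = xᵀ S y`. Over `ℤ₂` the vector `S i` is odd exactly when its
entries sum to `1`, so parity indicativity says `B(x, x) = B(x, c)` for all `x`, and a frame as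
required is the same thing as an injective isometry `φ : (ℤ₂^d, B) → ℤ₂^K` with `φ c = α`
(the `n`-th row of the synthesis matrix is `φ eₙ`).

*Source side* (`exists_orthonormal`, `exists_coordinates`). A refinement of Albert's theorem: since
`c` is not in the radical of `B`, there are orthonormal `u₁, …, u_r` with sum `c` whose orthogonal
complement is the radical. Hence `ℤ₂^d` is the orthogonal sum of `⟨u₁, …, u_r⟩` and the radical,
`r = rank S`, and `Tr S = B(c, c) = r` in `ℤ₂`.

*Target side* (`Splitting`, `exists_splitting`). With `n = d - r ≥ 1` and `K = r + 2n`, it remains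
to find in `ℤ₂^K` orthonormal `E₁, …, E_r` with sum `α`, and independent, mutually orthogonal
isotropic `N₁, …, N_n` orthogonal to all `E_i`. Up to permuting coordinates only the weight `w` of
`α` matters, and `w ≡ r` mod `2`. Such configurations add up under orthogonal sums, so a few blocks
suffice; the one that needs `n ≥ 1` is `splitting_many`, which handles `w < r`.
-/


open Matrix

/-! ### Orthonormal families with characteristic sum -/

/-- A refinement of Albert's theorem. If `c` is characteristic for the symmetric form `B` and not in
its radical, then `c` is the sum of an orthonormal family whose orthogonal complement is the
radical. -/
lemma exists_orthonormal (m : ℕ) : ∀ (V : Type) [AddCommGroup V] [Module (ZMod 2) V]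
    [FiniteDimensional (ZMod 2) V] (B : LinearMap.BilinForm (ZMod 2) V) (c : V),
    Module.finrank (ZMod 2) V = m → (∀ x y, B x y = B y x) → (∀ x, B x x = B x c) →
    (∃ y, B c y ≠ 0) →
    ∃ (r : ℕ) (u : Fin r → V), (∀ i j, B (u i) (u j) = if i = j then 1 else 0) ∧
      ∑ i, u i = c ∧ ∀ x, (∀ i, B (u i) x = 0) → ∀ y, B x y = 0 := by
  induction m using Nat.strong_induction_on with
  | _ m ih =>
  intro V _ _ _ B c hm hs hc hne
  obtain ⟨x₁, hx₁⟩ := hne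
  have hx₁ : B c x₁ = 1 := zmod2_eq_one hx₁
  by_cases H : ∃ x, B c x = 1 ∧ ∃ y, B (c - x) y ≠ 0
  · -- Split off `x` and continue in its orthogonal complement, where `c - x` is characteristic.
    obtain ⟨x, hx, y, hy⟩ := H
    have hxx : B x x = 1 := by rw [hc, hs, hx]
    let W : Submodule (ZMod 2) V := LinearMap.ker (B x)
    have hW : ∀ v, v ∈ W ↔ B x v = 0 := fun v => LinearMap.mem_ker
    have hp : ∀ v, v - B x v • x ∈ W := by
      intro v; rw [hW]; simp [hxx]
    have hcW : c - x ∈ W := by rw [hW, map_sub, ← hc, sub_self]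
    have hlt : Module.finrank (ZMod 2) W < m := by
      rw [← hm]
      apply Submodule.finrank_lt
      intro h
      have : x ∈ W := by rw [h]; trivial
      rw [hW, hxx] at this
      exact one_ne_zero this
    obtain ⟨r, u, hu, hsum, hrad⟩ := ih _ hlt W (B.restrict W) ⟨c - x, hcW⟩ rfl
      (fun a b => hs a b)
      (fun a => by
        have ha : B a x = 0 := by rw [hs]; exact a.2
        change B a a = B a (c - x)
        rw [map_sub, ha, sub_zero, hc])
      ⟨⟨_, hp y⟩, by
        have h0 : B (c - x) x = 0 := by rw [hs]; exact hcW
        change B (c - x) (y - B x y • x) ≠ 0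
        rwa [map_sub, map_smul, h0, smul_zero, sub_zero]⟩
    refine ⟨r + 1, Fin.cons x fun i => (u i : V), ?_, ?_, ?_⟩
    · intro i j
      have hxu : ∀ i, B x (u i) = 0 := fun i => (u i).2
      refine Fin.cases ?_ (fun i => ?_) i <;> refine Fin.cases ?_ (fun j => ?_) j
      · simp [hxx]
      · simp [hxu, (Fin.succ_ne_zero j).symm]
      · simp [hs _ x, hxu]
      · simpa using hu i j
    · rw [Fin.sum_univ_succ]
      have := congrArg Subtype.val hsum
      simp only [AddSubmonoidClass.coe_finsetSum] at this
      simp [this]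
    · intro z hz v
      have hzx : B x z = 0 := by simpa using hz 0
      have h1 := hrad ⟨z, hzx⟩ (fun i => by simpa using hz i.succ) ⟨_, hp v⟩
      have h2 : B z (v - B x v • x) = 0 := h1
      simpa [hs z x, hzx] using h2
  · -- Here `B` has rank one: everything orthogonal to `c` lies in the radical.
    push Not at H
    have key : ∀ y, B c y = 0 → ∀ z, B y z = 0 := by
      intro y hy z
      have h1 := H x₁ hx₁ z
      have h2 := H (x₁ + y) (by simp [hx₁, hy]) z
      simp only [map_sub, map_add, LinearMap.sub_apply, LinearMap.add_apply] at h1 h2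
      linear_combination h1 - h2
    have hcc : B c c = 1 := by
      apply zmod2_eq_one
      intro h
      have := key c h x₁
      rw [hx₁] at this
      exact one_ne_zero this
    refine ⟨1, fun _ => c, ?_, by simp, fun x hx => key x (hx 0)⟩
    intro i j
    simp [hcc, Subsingleton.elim i j]

/-- The orthogonal decomposition of `ℤ₂^d` for the form of `S`, in coordinates: `a` gives the
coordinates in the orthonormal family and `k` those in the radical. -/
lemma exists_coordinates {d : ℕ} (S : Matrix (Fin d) (Fin d) (ZMod 2)) (hsymm : S.IsSymm)
    (hpi : ParityIndicative S) (hdiag : S.diag ≠ 0) :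
    ∃ (a : (Fin d → ZMod 2) →ₗ[ZMod 2] (Fin S.rank → ZMod 2))
      (k : (Fin d → ZMod 2) →ₗ[ZMod 2] (Fin (d - S.rank) → ZMod 2)),
      (∀ x y, x ⬝ᵥ S *ᵥ y = a x ⬝ᵥ a y) ∧ a 1 = 1 ∧ k 1 = 0 ∧
      (∀ x, a x = 0 → k x = 0 → x = 0) := by
  have hsq : ∀ z : ZMod 2, z * z = z := by decide
  have hrow : ∀ i, S i i = ∑ j, S i j := by
    intro i
    have h := hpi i
    simp only [IsOddVec, dotp, hsq] at h
    by_cases h1 : S i i = 1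
    · rw [h1, h.1 h1]
    · by_contra h2
      have h3 : S i i = 0 := by
        by_contra h3; exact h1 (zmod2_eq_one h3)
      rw [h3] at h2
      exact h1 (h.2 (zmod2_eq_one (Ne.symm h2)))
  have hS1 : S *ᵥ 1 = S.diag := by
    ext i; simp [mulVec, dotProduct, hrow i]
  let B : LinearMap.BilinForm (ZMod 2) (Fin d → ZMod 2) := Matrix.toBilin' S
  have hB : ∀ x y, B x y = x ⬝ᵥ S *ᵥ y := fun x y => Matrix.toBilin'_apply' S x y
  have hs : ∀ x y, B x y = B y x := by
    intro x y
    rw [hB, hB, dotProduct_mulVec, dotProduct_comm, ← mulVec_transpose, hsymm.eq]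
  -- Additivity reduces `B x x = B x 1` to the standard basis: both sides are additive in `x`.
  have hc : ∀ x, B x x = B x 1 := by
    intro x
    have hadd : ∀ x y, B (x + y) (x + y) = B x x + B y y := by
      intro x y
      simp only [map_add, LinearMap.add_apply]
      rw [hs y x]
      linear_combination CharTwo.add_self_eq_zero (B x y)
    induction x using Pi.single_induction with
    | zero => simp
    | add f g hf hg => rw [hadd, hf, hg, map_add, LinearMap.add_apply]
    | single i z =>
      rw [hB, hB, hS1]
      simp [hsq, ← mul_assoc]
  have hne : ∃ y, B 1 y ≠ 0 := by
    by_contra! h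
    apply hdiag
    ext i
    have := h (Pi.single i 1)
    rw [hs, hB, hS1] at this
    simpa using this
  obtain ⟨r, u, hu, hsum, hrad⟩ := exists_orthonormal _ _ B 1 rfl hs hc hne
  let a : (Fin d → ZMod 2) →ₗ[ZMod 2] (Fin r → ZMod 2) := LinearMap.pi fun i => B (u i)
  have ha : ∀ x i, a x i = B (u i) x := fun x i => rfl
  have hau : ∀ f : Fin r → ZMod 2, a (∑ i, f i • u i) = f := by
    intro f
    ext j
    simp [ha, hu]
  have hker : LinearMap.ker a = LinearMap.ker S.mulVecLin := by
    ext x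
    simp only [LinearMap.mem_ker, Matrix.mulVecLin_apply]
    constructor
    · intro h
      ext i
      have := hrad x (fun i => congrFun h i) (Pi.single i 1)
      rw [hs, hB] at this
      simpa using this
    · intro h
      ext i
      rw [ha, hB, h]
      simp
  have h1 := LinearMap.finrank_range_add_finrank_ker a
  have h2 := LinearMap.finrank_range_add_finrank_ker S.mulVecLin
  have h3 : LinearMap.range a = ⊤ := LinearMap.range_eq_top.2 fun f => ⟨_, hau f⟩
  have h4 : Module.finrank (ZMod 2) (LinearMap.range S.mulVecLin) = S.rank := rfl
  rw [h3, finrank_top, Module.finrank_fin_fun, hker] at h1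
  rw [h4] at h2
  rw [Module.finrank_fin_fun] at h1 h2
  obtain rfl : r = S.rank := by omega
  have hn : Module.finrank (ZMod 2) (LinearMap.ker a) = d - S.rank := by rw [hker]; omega
  let e : LinearMap.ker a ≃ₗ[ZMod 2] (Fin (d - S.rank) → ZMod 2) :=
    LinearEquiv.ofFinrankEq _ _ (by rw [hn, Module.finrank_fin_fun])
  let q : (Fin d → ZMod 2) →ₗ[ZMod 2] (Fin d → ZMod 2) :=
    LinearMap.id - (Fintype.linearCombination (ZMod 2) u).comp a
  have hq : ∀ x, q x = x - ∑ i, a x i • u i := by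
    intro x; simp [q, Fintype.linearCombination_apply]
  have hqk : ∀ x, q x ∈ LinearMap.ker a := by
    intro x; rw [LinearMap.mem_ker, hq, map_sub, hau, sub_self]
  have ha1 : a 1 = 1 := by
    ext i; rw [ha, ← hc, hu]; simp
  refine ⟨a, e.toLinearMap.comp (q.codRestrict _ hqk), ?_, ha1, ?_, ?_⟩
  · intro x y
    rw [← hB]
    have h := hrad (q x) (fun i => congrFun (LinearMap.mem_ker.1 (hqk x)) i) y
    rw [hq] at h
    simp only [map_sub, map_sum, map_smul, LinearMap.sub_apply, LinearMap.sum_apply,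
      LinearMap.smul_apply, smul_eq_mul] at h
    rw [sub_eq_zero.1 h]
    rfl
  · have : q.codRestrict _ hqk 1 = 0 := by
      apply Subtype.ext
      simp [hq, ha1, hsum]
    simp [this]
  · intro x hx hk
    have h0 : q.codRestrict _ hqk x = 0 := by simpa using hk
    have h := congrArg Subtype.val h0
    simpa [hq, hx] using h

/-! ### Orthonormal and isotropic families of prescribed weight -/

/-- There are, in a coordinate space of dimension `r + 2 * n`, an orthonormal family of `r` vectors
(the rows of `E`) whose sum has weight `w`, and an independent family of `n` mutually orthogonal
isotropic vectors (the rows of `N`) orthogonal to it. The coordinate type is left free so that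
orthogonal sums of such configurations are block matrices. -/
def Splitting (r n w : ℕ) : Prop :=
  ∃ (R P I : Type) (_ : Fintype R) (_ : Fintype P) (_ : Fintype I) (_ : DecidableEq R)
    (E : Matrix R I (ZMod 2)) (N : Matrix P I (ZMod 2)),
    Fintype.card R = r ∧ Fintype.card P = n ∧ Fintype.card I = r + 2 * n ∧
    (Finset.univ.filter fun i => (1 ᵥ* E) i ≠ 0).card = w ∧
    E * Eᵀ = 1 ∧ E * Nᵀ = 0 ∧ N * Nᵀ = 0 ∧ ∀ v, v ᵥ* N = 0 → v = 0

/-- The orthogonal sum of two configurations. -/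
lemma Splitting.add {r n w r' n' w' : ℕ} (h : Splitting r n w) (h' : Splitting r' n' w') :
    Splitting (r + r') (n + n') (w + w') := by
  obtain ⟨R, P, I, _, _, _, _, E, N, hR, hP, hI, hw, hE, hEN, hN, hi⟩ := h
  obtain ⟨R', P', I', _, _, _, _, E', N', hR', hP', hI', hw', hE', hEN', hN', hi'⟩ := h'
  refine ⟨R ⊕ R', P ⊕ P', I ⊕ I', inferInstance, inferInstance, inferInstance, inferInstance,
    fromBlocks E 0 0 E', fromBlocks N 0 0 N', ?_, ?_, ?_, ?_, ?_, ?_, ?_, ?_⟩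
  · simp [hR, hR']
  · simp [hP, hP']
  · simp [hI, hI']; ring
  · have h1 : (1 : R ⊕ R' → ZMod 2) ∘ Sum.inl = 1 := rfl
    have h2 : (1 : R ⊕ R' → ZMod 2) ∘ Sum.inr = 1 := rfl
    rw [← hw, ← hw', Finset.card_filter, Finset.card_filter, Finset.card_filter,
      Fintype.sum_sum_type]
    simp [vecMul_fromBlocks, h1, h2]
  · simp [fromBlocks_transpose, fromBlocks_multiply, hE, hE']
  · simp [fromBlocks_transpose, fromBlocks_multiply, hEN, hEN']
  · simp [fromBlocks_transpose, fromBlocks_multiply, hN, hN']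
  · intro v hv
    rw [vecMul_fromBlocks] at hv
    simp only [vecMul_zero, add_zero, zero_add] at hv
    have h1 := hi _ (funext fun i => congrFun hv (Sum.inl i))
    have h2 := hi' _ (funext fun i => congrFun hv (Sum.inr i))
    ext (i | i)
    · exact congrFun h1 i
    · exact congrFun h2 i

/-- The standard basis of `ℤ₂^r`. -/
lemma splitting_std (r : ℕ) : Splitting r 0 r := by
  refine ⟨Fin r, Fin 0, Fin r, inferInstance, inferInstance, inferInstance, inferInstance,
    1, 0, ?_, ?_, ?_, ?_, ?_, ?_, ?_, ?_⟩ <;> simp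

/-- The vectors `e_i + e_{n+i}` in `ℤ₂^(2n)`. -/
lemma splitting_isotropic (n : ℕ) : Splitting 0 n 0 := by
  refine ⟨Fin 0, Fin n, Fin n ⊕ Fin n, inferInstance, inferInstance, inferInstance, inferInstance,
    0, fromCols 1 1, ?_, ?_, ?_, ?_, ?_, ?_, ?_, ?_⟩
  · simp
  · simp
  · simp [two_mul]
  · simp
  · exact Subsingleton.elim _ _
  · exact Subsingleton.elim _ _
  · rw [transpose_fromCols, fromCols_mul_fromRows]
    ext i j
    simp [CharTwo.add_self_eq_zero]
  · intro v hv
    ext i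
    have := congrFun hv (Sum.inl i)
    simpa [vecMul_fromCols] using this

/-- The all-ones vector of `ℤ₂^(1+2p)` and, with coordinates `0, …, 2p`, the vectors `e_i + e_{p+i}`
for `1 ≤ i ≤ p`. -/
lemma splitting_one (p : ℕ) : Splitting 1 p (2 * p + 1) := by
  refine ⟨Unit, Fin p, Unit ⊕ (Fin p ⊕ Fin p), inferInstance, inferInstance, inferInstance,
    inferInstance, Matrix.of fun _ _ => 1, fromCols 0 (fromCols 1 1), ?_, ?_, ?_, ?_, ?_, ?_, ?_, ?_⟩
  · simp
  · simp
  · simp; ring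
  · have : (Finset.univ.filter fun i : Unit ⊕ (Fin p ⊕ Fin p) =>
        ((1 : Unit → ZMod 2) ᵥ* (Matrix.of fun _ _ => (1 : ZMod 2))) i ≠ 0) = Finset.univ := by
      ext i; simp [vecMul, dotProduct]
    rw [this]
    simp; ring
  · ext i j
    simp [Matrix.mul_apply, CharTwo.add_self_eq_zero]
  · ext i j
    simp [Matrix.mul_apply, Matrix.one_apply, CharTwo.add_self_eq_zero]
  · rw [transpose_fromCols, fromCols_mul_fromRows, transpose_fromCols, fromCols_mul_fromRows]
    ext i j
    simp [CharTwo.add_self_eq_zero]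
  · intro v hv
    ext i
    have := congrFun hv (Sum.inr (Sum.inl i))
    simpa [vecMul_fromCols] using this

/-- An orthonormal family of `2m + 1` vectors in `ℤ₂^(2m+3)` whose sum has weight one. With
coordinates `0, …, 2m + 2`, it consists of `J + e_i + e_{2m+2}` for `1 ≤ i ≤ 2m + 1`
(`J` the all-ones vector), and the isotropic vector orthogonal to it is `e_1 + ⋯ + e_{2m+2}`. -/
lemma splitting_many (m : ℕ) : Splitting (2 * m + 1) 1 1 := by
  have h2 : (2 : ZMod 2) = 0 := rfl
  refine ⟨Fin (2 * m + 1), Unit, Unit ⊕ (Fin (2 * m + 1) ⊕ Unit), inferInstance, inferInstance,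
    inferInstance, inferInstance,
    fromCols (Matrix.of fun _ _ => 1) (fromCols (Matrix.of (fun _ _ => 1) + 1) 0),
    fromCols 0 (Matrix.of fun _ _ => 1), ?_, ?_, ?_, ?_, ?_, ?_, ?_, ?_⟩
  · simp
  · simp
  · simp; ring
  · rw [Finset.card_eq_one]
    refine ⟨Sum.inl (), ?_⟩
    ext (i | i | i) <;>
      simp [vecMul, dotProduct, Matrix.one_apply, Finset.sum_add_distrib, h2]
    decide
  · ext i j
    simp [Matrix.mul_apply, Matrix.one_apply, Finset.sum_add_distrib, mul_add, h2]
    split_ifs <;> decide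
  · ext i j
    simp [Matrix.mul_apply, Matrix.one_apply, Finset.sum_add_distrib, h2]
    decide
  · ext i j
    simp [Matrix.mul_apply, h2]
    decide
  · intro v hv
    ext i
    have := congrFun hv (Sum.inr (Sum.inr ()))
    simpa [vecMul, dotProduct] using this

lemma exists_splitting {r n w : ℕ} (hr : r ≠ 0) (hn : n ≠ 0) (hw : w ≠ 0)
    (hpar : (w : ZMod 2) = r) (hle : w ≤ r + 2 * n) : Splitting r n w := by
  have hmod : w % 2 = r % 2 := (ZMod.natCast_eq_natCast_iff' w r 2).1 hpar
  rcases le_or_gt r w with h | h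
  · obtain ⟨p, hp⟩ : ∃ p, w = r + 2 * p := ⟨(w - r) / 2, by omega⟩
    have := ((splitting_std (r - 1)).add (splitting_one p)).add (splitting_isotropic (n - p))
    convert this using 1 <;> omega
  · obtain ⟨m, hm⟩ : ∃ m, r = w + 2 * m := ⟨(r - w) / 2, by omega⟩
    have := ((splitting_std (w - 1)).add (splitting_many m)).add (splitting_isotropic (n - 1))
    convert this using 1 <;> omega

/-- Permuting coordinates, the sum of the orthonormal family can be any prescribed vector of the
right weight. -/
lemma Splitting.realize {r n w K : ℕ} (h : Splitting r n w) (hK : K = r + 2 * n)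
    (α : Fin K → ZMod 2) (hα : zeroNorm α = w) :
    ∃ (E : Matrix (Fin r) (Fin K) (ZMod 2)) (N : Matrix (Fin n) (Fin K) (ZMod 2)),
      1 ᵥ* E = α ∧ E * Eᵀ = 1 ∧ E * Nᵀ = 0 ∧ N * Nᵀ = 0 ∧ ∀ v, v ᵥ* N = 0 → v = 0 := by
  obtain ⟨R, P, I, _, _, _, _, E, N, hR, hP, hI, hw, hE, hEN, hN, hi⟩ := h
  classical
  let eR : Fin r ≃ R := (Fintype.equivFinOfCardEq hR).symm
  let eP : Fin n ≃ P := (Fintype.equivFinOfCardEq hP).symm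
  have hc : Fintype.card (Fin K) = Fintype.card I := by simp [hI, hK]
  have c1 : Fintype.card {i // α i ≠ 0} = Fintype.card {i // (1 ᵥ* E) i ≠ 0} := by
    rw [Fintype.card_subtype, Fintype.card_subtype, hw, ← hα, zeroNorm]
  have c2 : Fintype.card {i // ¬ α i ≠ 0} = Fintype.card {i // ¬ (1 ᵥ* E) i ≠ 0} := by
    rw [Fintype.card_subtype_compl fun i => α i ≠ 0,
      Fintype.card_subtype_compl fun i => (1 ᵥ* E) i ≠ 0, c1, hc]
  let e : Fin K ≃ I := (Equiv.sumCompl _).symm.trans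
    (((Fintype.equivOfCardEq c1).sumCongr (Fintype.equivOfCardEq c2)).trans (Equiv.sumCompl _))
  have he : ∀ i, (1 ᵥ* E) (e i) = α i := by
    intro i
    by_cases h : α i ≠ 0
    · have : e i = (Fintype.equivOfCardEq c1 ⟨i, h⟩ : I) := by
        simp only [e, Equiv.trans_apply]
        rw [Equiv.sumCompl_symm_apply_of_pos (p := fun i => α i ≠ 0) h]; rfl
      rw [zmod2_eq_one h, this]
      exact zmod2_eq_one (Fintype.equivOfCardEq c1 ⟨i, h⟩).2
    · have : e i = (Fintype.equivOfCardEq c2 ⟨i, h⟩ : I) := by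
        simp only [e, Equiv.trans_apply]
        rw [Equiv.sumCompl_symm_apply_of_neg (p := fun i => α i ≠ 0) h]; rfl
      rw [not_not.1 h, this]
      exact not_not.1 (Fintype.equivOfCardEq c2 ⟨i, h⟩).2
  refine ⟨E.submatrix eR e, N.submatrix eP e, ?_, ?_, ?_, ?_, ?_⟩
  · ext i
    rw [← he]
    simp only [vecMul, dotProduct, submatrix_apply, Pi.one_apply]
    exact Equiv.sum_comp eR fun x => 1 * E x (e i)
  · rw [transpose_submatrix, submatrix_mul_equiv, hE, submatrix_one_equiv]
  · rw [transpose_submatrix, submatrix_mul_equiv, hEN]; rfl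
  · rw [transpose_submatrix, submatrix_mul_equiv, hN]; rfl
  · intro v hv
    have := hi (v ∘ eP.symm) (by
      ext j
      have h1 := congrFun hv (e.symm j)
      simp only [vecMul, dotProduct, submatrix_apply, Equiv.apply_symm_apply] at h1 ⊢
      rw [← Equiv.sum_comp eP]
      simpa using h1)
    ext i
    simpa using congrFun this (eP i)

/-! ### The isometric embedding -/

theorem stmt_15 {d K : ℕ} (S : Matrix (Fin d) (Fin d) (ZMod 2))
    (hsymm : S.IsSymm) (hpi : ParityIndicative S)
    (hdiag : S.diag ≠ 0) (hrank : S.rank < d)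
    (hK : K = 2 * d - S.rank)
    (α : Fin K → ZMod 2) (hα : α ≠ 0)
    (hpar : (zeroNorm α : ZMod 2) = S.trace) :
    ∃ F : Fin K → Fin d → ZMod 2,
      IsFrame F ∧ S = synthesis F * (synthesis F)ᵀ ∧
        ∀ i, dotp (F i) (F i) = α i := by
  have hsq : ∀ z : ZMod 2, z * z = z := by decide
  obtain ⟨a, k, hak, ha1, hk1, hinj⟩ := exists_coordinates S hsymm hpi hdiag
  have hSij : ∀ i j, S i j = a (Pi.single i 1) ⬝ᵥ a (Pi.single j 1) := by
    intro i j; rw [← hak]; simp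
  have hone : (1 : Fin d → ZMod 2) = ∑ i, Pi.single i 1 :=
    (Finset.univ_sum_single (1 : Fin d → ZMod 2)).symm
  have htr : S.trace = (S.rank : ZMod 2) := by
    -- `a eᵢ ⬝ a eᵢ` is the sum of the entries of `a eᵢ`, so summing over `i` gives that of `a 1`.
    have h : S.trace = ∑ j, a 1 j := by
      rw [hone, map_sum]
      simp only [trace, diag_apply, hSij, dotProduct, hsq, Finset.sum_apply]
      exact Finset.sum_comm
    rw [h, ha1]; simp
  have hr : S.rank ≠ 0 := by
    intro h
    apply hdiag
    have : IsEmpty (Fin S.rank) := by rw [h]; infer_instance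
    ext i
    rw [diag_apply, hSij]
    simp [dotProduct]
  have hw0 : zeroNorm α ≠ 0 := by
    intro h
    apply hα
    ext i
    by_contra hi
    rw [zeroNorm, Finset.card_eq_zero] at h
    have : i ∈ (Finset.univ.filter fun i => α i ≠ 0) := by simpa using hi
    rw [h] at this
    simp at this
  have hwK : zeroNorm α ≤ K := (Finset.card_le_univ _).trans (by simp)
  obtain ⟨E, N, h1E, hE, hEN, hN, hNi⟩ :=
    (exists_splitting (n := d - S.rank) hr (by omega) hw0 (hpar.trans htr) (by omega)).realize
      (by omega) α rfl
  let φ : (Fin d → ZMod 2) →ₗ[ZMod 2] (Fin K → ZMod 2) :=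
    E.vecMulLinear.comp a + N.vecMulLinear.comp k
  have hφ : ∀ x, φ x = a x ᵥ* E + k x ᵥ* N := fun x => rfl
  have hNE : N * Eᵀ = 0 := by
    rw [← transpose_transpose N, ← transpose_mul, hEN, transpose_zero]
  have hiso : ∀ x y, φ x ⬝ᵥ φ y = x ⬝ᵥ S *ᵥ y := by
    intro x y
    have key : ∀ {p q : ℕ} (A : Matrix (Fin p) (Fin K) (ZMod 2))
        (C : Matrix (Fin q) (Fin K) (ZMod 2)) (v w), (v ᵥ* A) ⬝ᵥ (w ᵥ* C) =
          (v ᵥ* (A * Cᵀ)) ⬝ᵥ w := by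
      intro p q A C v w
      rw [← vecMul_vecMul, ← mulVec_transpose C w, dotProduct_mulVec]
    rw [hφ, hφ, hak, add_dotProduct, dotProduct_add, dotProduct_add]
    simp only [key, hE, hEN, hNE, hN]
    simp
  have hφinj : ∀ x, φ x = 0 → x = 0 := by
    intro x hx
    have h1 : φ x ᵥ* Eᵀ = a x := by
      rw [hφ, add_vecMul, vecMul_vecMul, vecMul_vecMul, hE, hNE]; simp
    have ha : a x = 0 := by rw [← h1, hx, zero_vecMul]
    refine hinj x ha (hNi _ ?_)
    rw [hφ, ha] at hx
    simpa using hx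
  refine ⟨fun i n => φ (Pi.single n 1) i, ?_, ?_, ?_⟩
  · -- The rows `φ eₙ` are independent, so the synthesis matrix has rank `d` and its columns span.
    set F : Fin K → Fin d → ZMod 2 := fun i n => φ (Pi.single n 1) i with hF
    have hli : LinearIndependent (ZMod 2) (synthesis F).row := by
      have : (synthesis F).row = φ ∘ fun n => Pi.single n 1 := by
        ext n i; rfl
      rw [this]
      refine LinearIndependent.map' ?_ φ (LinearMap.ker_eq_bot'.2 hφinj)
      exact Pi.linearIndependent_single_one (Fin d) (ZMod 2)
    have hrk := hli.rank_matrix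
    rw [Matrix.rank_eq_finrank_span_cols] at hrk
    apply Submodule.eq_top_of_finrank_eq
    rw [Module.finrank_fin_fun]
    exact hrk.trans (Fintype.card_fin d)
  · ext i j
    have := hiso (Pi.single i 1) (Pi.single j 1)
    simp only [mulVec_single_one, single_one_dotProduct] at this
    exact this.symm
  · intro i
    have h1 : φ 1 i = α i := by rw [hφ, ha1, hk1, h1E]; simp
    rw [← h1, hone, map_sum]
    simp [dotp, hsq]
end

section
/- Let S be a d×d symmetric matrix over ℤ₂ that is not parity indicative, and let F = (f_1, …, f_K) be any K-element frame for ℤ₂^d with S = Θ_F Θ_F*. Then it is not the case that (f_i, f_i) = 1 for every i; that is, the vector α ∈ ℤ₂^K defined by α[i] = (f_i, f_i) satisfies ‖α‖₀ ≠ K (some frame vector f_i is even). -/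
open Matrix

/-- Over `ℤ₂` every `x` satisfies `x * x = x`, so `(v, v) = ∑ n, v n`. If every frame vector is
odd, then summing row `i` of `S` and exchanging sums gives
`∑ k, S i k = ∑ j, F j i * (∑ k, F j k) = ∑ j, F j i = S i i`,
so `S` is parity indicative. -/
theorem stmt_19 {d K : ℕ} (S : Matrix (Fin d) (Fin d) (ZMod 2))
    (hsymm : S.IsSymm) (hpi : ¬ ParityIndicative S)
    (F : Fin K → Fin d → ZMod 2) (hF : IsFrame F)
    (hS : S = synthesis F * (synthesis F)ᵀ) :
    ¬ ∀ i, dotp (F i) (F i) = 1 := by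
  intro h
  apply hpi
  have hsq : ∀ x : ZMod 2, x * x = x := by decide
  intro i
  have key : S i i = dotp (S i) (S i) := by
    simp only [dotp, hsq] at h ⊢
    simp only [hS, Matrix.mul_apply, synthesis, Matrix.transpose_apply, Matrix.of_apply, hsq]
    rw [Finset.sum_comm]
    simp only [← Finset.mul_sum, h, mul_one]
  rw [key, IsOddVec]
end
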